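/- arXiv:2503.13317 — 3 statements merged into one kernel-verified Lean document; each statement's English description precedes it below -/
import Mathlib

section
/- Let 𝒳 be a measurable space, ν a probability measure on 𝒳, and κ : 𝒳 → Measure ℝ a measurable family of probability measures, each with finite second moment, with m(x') = ∫ y ∂(κ x') and with m and m² ν-integrable. Let π = ν.bind (fun x' => (κ x').prod (κ x')) be the model joint predictive on ℝ × ℝ, and assume y₁, y₂ and y₁·y₂ are π-integrable. Then the model covariance between the two predicted labels equals the variance of the true conditional means under ν: ∫ y₁·y₂ ∂π − (∫ y₁ ∂π)·(∫ y₂ ∂π) = ∫ m(x')² ∂ν(x') − (∫ m(x') ∂ν(x'))². (In the paper's notation: C_θ[Y₁,Y₂|x] = V[E[Y|X] | [x]], i.e. the model covariance equals the grouping loss / epistemic uncertainty.) -/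
open MeasureTheory

section ConditionallyIndependentPair

open ProbabilityTheory

variable {𝒳 β γ : Type*} [MeasurableSpace 𝒳] [MeasurableSpace β] [MeasurableSpace γ]
  {ν : Measure 𝒳} {κ : Kernel 𝒳 β} {η : Kernel 𝒳 γ}

theorem integral_bind {E : Type*} [NormedAddCommGroup E] [NormedSpace ℝ E]
    {ρ : 𝒳 → Measure β} (hρ : AEMeasurable ρ ν) {f : β → E} (hf : Integrable f (ν.bind ρ)) :
    ∫ y, f y ∂ν.bind ρ = ∫ x, ∫ y, f y ∂ρ x ∂ν := by
  let K : Kernel 𝒳 β := ⟨hρ.mk ρ, hρ.measurable_mk⟩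
  have hbind : ν.bind ρ = K ∘ₘ ν := Measure.bind_congr_right hρ.ae_eq_mk
  rw [hbind] at hf ⊢
  calc ∫ y, f y ∂(K ∘ₘ ν) = ∫ x, ∫ y, f y ∂K x ∂ν :=
        Kernel.integral_comp (κ := Kernel.const Unit ν) (a := ()) hf
    _ = ∫ x, ∫ y, f y ∂ρ x ∂ν :=
        integral_congr_ae <| hρ.ae_eq_mk.symm.fun_comp fun μ => ∫ y, f y ∂μ

theorem integral_bind_prod {E : Type*} [NormedAddCommGroup E] [NormedSpace ℝ E]
    [IsSFiniteKernel κ] [IsSFiniteKernel η] {h : β × γ → E}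
    (hh : Integrable h (ν.bind fun x => (κ x).prod (η x))) :
    ∫ p, h p ∂(ν.bind fun x => (κ x).prod (η x)) = ∫ x, ∫ p, h p ∂(κ x).prod (η x) ∂ν := by
  simp only [← Kernel.prod_apply] at hh ⊢
  exact integral_bind (κ ×ₖ η).measurable.aemeasurable hh

theorem integral_bind_prod_fst {E : Type*} [NormedAddCommGroup E] [NormedSpace ℝ E]
    [IsSFiniteKernel κ] [IsMarkovKernel η] {f : β → E}
    (hf : Integrable (fun p : β × γ => f p.1) (ν.bind fun x => (κ x).prod (η x))) :
    ∫ p, f p.1 ∂(ν.bind fun x => (κ x).prod (η x)) = ∫ x, ∫ y, f y ∂κ x ∂ν := by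
  simp only [integral_bind_prod hf, integral_fun_fst, probReal_univ, one_smul]

theorem integral_bind_prod_snd {E : Type*} [NormedAddCommGroup E] [NormedSpace ℝ E]
    [IsMarkovKernel κ] [IsSFiniteKernel η] {g : γ → E}
    (hg : Integrable (fun p : β × γ => g p.2) (ν.bind fun x => (κ x).prod (η x))) :
    ∫ p, g p.2 ∂(ν.bind fun x => (κ x).prod (η x)) = ∫ x, ∫ z, g z ∂η x ∂ν := by
  simp only [integral_bind_prod hg, integral_fun_snd, probReal_univ, one_smul]

theorem integral_bind_prod_mul {𝕜 : Type*} [RCLike 𝕜] [IsSFiniteKernel κ] [IsSFiniteKernel η]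
    {f : β → 𝕜} {g : γ → 𝕜}
    (hfg : Integrable (fun p : β × γ => f p.1 * g p.2) (ν.bind fun x => (κ x).prod (η x))) :
    ∫ p, f p.1 * g p.2 ∂(ν.bind fun x => (κ x).prod (η x)) =
      ∫ x, (∫ y, f y ∂κ x) * (∫ z, g z ∂η x) ∂ν := by
  simp only [integral_bind_prod hfg, integral_prod_mul]

theorem model_covariance_eq_grouping_loss_general {𝕜 : Type*} [RCLike 𝕜]
    [IsMarkovKernel κ] [IsMarkovKernel η] {f : β → 𝕜} {g : γ → 𝕜}
    (hf : Integrable (fun p : β × γ => f p.1) (ν.bind fun x => (κ x).prod (η x)))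
    (hg : Integrable (fun p : β × γ => g p.2) (ν.bind fun x => (κ x).prod (η x)))
    (hfg : Integrable (fun p : β × γ => f p.1 * g p.2) (ν.bind fun x => (κ x).prod (η x))) :
    (∫ p, f p.1 * g p.2 ∂(ν.bind fun x => (κ x).prod (η x))) -
        (∫ p, f p.1 ∂(ν.bind fun x => (κ x).prod (η x))) *
          (∫ p, g p.2 ∂(ν.bind fun x => (κ x).prod (η x))) =
      (∫ x, (∫ y, f y ∂κ x) * (∫ z, g z ∂η x) ∂ν) -
        (∫ x, ∫ y, f y ∂κ x ∂ν) * (∫ x, ∫ z, g z ∂η x ∂ν) := by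
  rw [integral_bind_prod_mul hfg, integral_bind_prod_fst hf, integral_bind_prod_snd hg]

end ConditionallyIndependentPair

/-- **Model covariance equals grouping loss.**
For a model calibrated at predicting pairs of conditionally iid labels, with
joint predictive `π = ν.bind (fun x' => (κ x').prod (κ x'))`, the covariance of
the two predicted labels equals the variance of the true conditional means
under `ν`: `C_θ[Y₁,Y₂|x] = V[E[Y|X] | [x]]`. -/
theorem model_covariance_eq_grouping_loss
    {𝒳 : Type*} [MeasurableSpace 𝒳]
    (ν : Measure 𝒳) [IsProbabilityMeasure ν]
    (κ : 𝒳 → Measure ℝ) (hκ : Measurable κ)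
    (hκprob : ∀ x', IsProbabilityMeasure (κ x'))
    (hκmom : ∀ x', Integrable (fun y : ℝ => y ^ 2) (κ x'))
    (hmean : Integrable (fun x' => ∫ y, y ∂(κ x')) ν)
    (hmeansq : Integrable (fun x' => (∫ y, y ∂(κ x')) ^ 2) ν)
    (hπ1 : Integrable (fun p : ℝ × ℝ => p.1) (ν.bind (fun x' => (κ x').prod (κ x'))))
    (hπ2 : Integrable (fun p : ℝ × ℝ => p.2) (ν.bind (fun x' => (κ x').prod (κ x'))))
    (hπ12 : Integrable (fun p : ℝ × ℝ => p.1 * p.2) (ν.bind (fun x' => (κ x').prod (κ x')))) :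
    (∫ p : ℝ × ℝ, p.1 * p.2 ∂(ν.bind (fun x' => (κ x').prod (κ x')))) -
        (∫ p : ℝ × ℝ, p.1 ∂(ν.bind (fun x' => (κ x').prod (κ x')))) *
          (∫ p : ℝ × ℝ, p.2 ∂(ν.bind (fun x' => (κ x').prod (κ x')))) =
      (∫ x', (∫ y, y ∂(κ x')) ^ 2 ∂ν) - (∫ x', (∫ y, y ∂(κ x')) ∂ν) ^ 2 := by
  have : ProbabilityTheory.IsMarkovKernel ⟨κ, hκ⟩ := ⟨hκprob⟩
  simp only [sq]
  exact model_covariance_eq_grouping_loss_general (κ := ⟨κ, hκ⟩) (η := ⟨κ, hκ⟩)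
    (f := fun y => y) (g := fun y => y) hπ1 hπ2 hπ12
end

section
/- Let 𝒳 be a measurable space, ν a probability measure on 𝒳, and f : 𝒳 → ℝ → ℝ a measurable nonnegative function such that for each x' the measure κ x' with Lebesgue density f x' is a probability measure with finite second moment; write m(x') = ∫ y · f x' y dy for the conditional mean, and assume all the following integrals exist and Fubini's theorem applies. Define the covariance operator kernel Σ(y₁, y₂) = ∫ f x' y₁ · f x' y₂ ∂ν(x') − (∫ f x' y₁ ∂ν(x'))·(∫ f x' y₂ ∂ν(x')). Then integrating this kernel against y₁·y₂ recovers the variance of the conditional means: ∫∫ Σ(y₁, y₂) · y₁ · y₂ dy₁ dy₂ = ∫ m(x')² ∂ν(x') − (∫ m(x') ∂ν(x'))². (In the paper's notation: ∫∫ Σ^θ_{y₁,y₂}(x) y₁ y₂ dy₁ dy₂ = V[E[Y|X] | [x]] = cov_θ(x).) -/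
open MeasureTheory

/-!
Multiplying the kernel by the weights `y₁` and `y₂` amounts to replacing the family `f x' y` by
`y * f x' y`, so it suffices to integrate an unweighted covariance kernel. Both of its terms
separate: for fixed `x'` the integrand of the second moment is a function of `y₁` times a function
of `y₂`, so by Fubini it integrates to the `ν`-mean of `m(x')²`, and the product of the means
integrates to the square of the `ν`-mean of `m(x')`.
-/

section CovarianceKernel

variable {𝒳 Y Z 𝕜 : Type*} [MeasurableSpace 𝒳] [RCLike 𝕜]

/-- The covariance kernel `Σ(y, z)` of two families of random variables `f · y` and `g · z` under
`ν`; the covariance operator of a random density `f` is the case `g = f`. It is encoded as a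
difference of moments, without complex conjugation, rather than by `ProbabilityTheory.covariance`,
whose centered form needs square-integrability to expand at each pair `(y, z)`. -/
noncomputable def covarianceKernel (ν : Measure 𝒳) (f : 𝒳 → Y → 𝕜) (g : 𝒳 → Z → 𝕜)
    (y : Y) (z : Z) : 𝕜 :=
  (∫ x, f x y * g x z ∂ν) - (∫ x, f x y ∂ν) * ∫ x, g x z ∂ν

theorem covarianceKernel_weight_mul (ν : Measure 𝒳) (f : 𝒳 → Y → 𝕜) (g : 𝒳 → Z → 𝕜)
    (φ : Y → 𝕜) (ψ : Z → 𝕜) (y : Y) (z : Z) :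
    covarianceKernel ν (fun x y ↦ φ y * f x y) (fun x z ↦ ψ z * g x z) y z =
      covarianceKernel ν f g y z * φ y * ψ z := by
  have hmul : ∀ x, φ y * f x y * (ψ z * g x z) = φ y * ψ z * (f x y * g x z) :=
    fun x ↦ mul_mul_mul_comm _ _ _ _
  simp only [covarianceKernel, hmul, integral_const_mul]
  ring

variable [MeasurableSpace Y] [MeasurableSpace Z] {ν : Measure 𝒳} [SFinite ν]
  {μ : Measure Y} [SFinite μ] {ρ : Measure Z} [SFinite ρ] {f : 𝒳 → Y → 𝕜} {g : 𝒳 → Z → 𝕜}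

theorem integral_prod_integral_mul
    (hfg : Integrable (fun q : (Y × Z) × 𝒳 ↦ f q.2 q.1.1 * g q.2 q.1.2) ((μ.prod ρ).prod ν)) :
    ∫ p, ∫ x, f x p.1 * g x p.2 ∂ν ∂(μ.prod ρ) = ∫ x, (∫ y, f x y ∂μ) * ∫ z, g x z ∂ρ ∂ν :=
  calc ∫ p, ∫ x, f x p.1 * g x p.2 ∂ν ∂(μ.prod ρ)
      = ∫ x, ∫ p, f x p.1 * g x p.2 ∂(μ.prod ρ) ∂ν := integral_integral_swap hfg
    _ = ∫ x, (∫ y, f x y ∂μ) * ∫ z, g x z ∂ρ ∂ν := by simp only [integral_prod_mul]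

theorem integral_integral_covarianceKernel
    (hf : Integrable (fun q : Y × 𝒳 ↦ f q.2 q.1) (μ.prod ν))
    (hg : Integrable (fun q : Z × 𝒳 ↦ g q.2 q.1) (ρ.prod ν))
    (hfg : Integrable (fun q : (Y × Z) × 𝒳 ↦ f q.2 q.1.1 * g q.2 q.1.2) ((μ.prod ρ).prod ν)) :
    ∫ y, ∫ z, covarianceKernel ν f g y z ∂ρ ∂μ =
      (∫ x, (∫ y, f x y ∂μ) * ∫ z, g x z ∂ρ ∂ν) -
        (∫ x, ∫ y, f x y ∂μ ∂ν) * ∫ x, ∫ z, g x z ∂ρ ∂ν := by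
  have h_moment : Integrable (fun p : Y × Z ↦ ∫ x, f x p.1 * g x p.2 ∂ν) (μ.prod ρ) :=
    hfg.integral_prod_left
  have h_means : Integrable (fun p : Y × Z ↦ (∫ x, f x p.1 ∂ν) * ∫ x, g x p.2 ∂ν) (μ.prod ρ) :=
    hf.integral_prod_left.mul_prod hg.integral_prod_left
  calc ∫ y, ∫ z, covarianceKernel ν f g y z ∂ρ ∂μ
      = ∫ p, covarianceKernel ν f g p.1 p.2 ∂(μ.prod ρ) :=
        integral_integral (h_moment.sub h_means)
    _ = (∫ p, ∫ x, f x p.1 * g x p.2 ∂ν ∂(μ.prod ρ)) -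
          ∫ p, (∫ x, f x p.1 ∂ν) * ∫ x, g x p.2 ∂ν ∂(μ.prod ρ) :=
        integral_sub h_moment h_means
    _ = (∫ x, (∫ y, f x y ∂μ) * ∫ z, g x z ∂ρ ∂ν) -
          (∫ y, ∫ x, f x y ∂ν ∂μ) * ∫ z, ∫ x, g x z ∂ν ∂ρ := by
        rw [integral_prod_integral_mul hfg,
          integral_prod_mul (fun y ↦ ∫ x, f x y ∂ν) (fun z ↦ ∫ x, g x z ∂ν)]
    _ = (∫ x, (∫ y, f x y ∂μ) * ∫ z, g x z ∂ρ ∂ν) -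
          (∫ x, ∫ y, f x y ∂μ ∂ν) * ∫ x, ∫ z, g x z ∂ρ ∂ν := by
        rw [integral_integral_swap (f := fun y x ↦ f x y) hf,
          integral_integral_swap (f := fun z x ↦ g x z) hg]

theorem covariance_operator_integral_general {φ : Y → 𝕜} {ψ : Z → 𝕜}
    (hf : Integrable (fun q : Y × 𝒳 ↦ φ q.1 * f q.2 q.1) (μ.prod ν))
    (hg : Integrable (fun q : Z × 𝒳 ↦ ψ q.1 * g q.2 q.1) (ρ.prod ν))
    (hfg : Integrable
      (fun q : (Y × Z) × 𝒳 ↦ f q.2 q.1.1 * g q.2 q.1.2 * φ q.1.1 * ψ q.1.2)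
      ((μ.prod ρ).prod ν)) :
    ∫ y, ∫ z, covarianceKernel ν f g y z * φ y * ψ z ∂ρ ∂μ =
      (∫ x, (∫ y, φ y * f x y ∂μ) * ∫ z, ψ z * g x z ∂ρ ∂ν) -
        (∫ x, ∫ y, φ y * f x y ∂μ ∂ν) * ∫ x, ∫ z, ψ z * g x z ∂ρ ∂ν := by
  have h_weighted : Integrable
      (fun q : (Y × Z) × 𝒳 ↦ φ q.1.1 * f q.2 q.1.1 * (ψ q.1.2 * g q.2 q.1.2))
      ((μ.prod ρ).prod ν) :=
    hfg.congr (.of_forall fun q ↦ by ring)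
  simpa only [covarianceKernel_weight_mul] using
    integral_integral_covarianceKernel (f := fun x y ↦ φ y * f x y) (g := fun x z ↦ ψ z * g x z)
      hf hg h_weighted

end CovarianceKernel

/-- **Integral of the covariance operator kernel.**
For a pair-calibrated model whose conditional laws have Lebesgue densities
`f x'`, the covariance operator kernel is
`Σ(y₁,y₂) = ∫ f x' y₁ · f x' y₂ ∂ν − (∫ f x' y₁ ∂ν)(∫ f x' y₂ ∂ν)`.
Integrating it against `y₁ · y₂` recovers the variance of the conditional
means `m(x') = ∫ y · f x' y dy`:
`∫∫ Σ(y₁,y₂) y₁ y₂ dy₁ dy₂ = V[E[Y|X] | [x]]`. -/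
theorem covariance_operator_integral
    {𝒳 : Type*} [MeasurableSpace 𝒳]
    (ν : Measure 𝒳) [IsProbabilityMeasure ν]
    (f : 𝒳 → ℝ → ℝ)
    (hf : Measurable (Function.uncurry f))
    (hf_nonneg : ∀ x' y, 0 ≤ f x' y)
    -- each `f x'` is a probability density with finite second moment
    (hf_prob : ∀ x', IsProbabilityMeasure (volume.withDensity (fun y => ENNReal.ofReal (f x' y))))
    (hf_mom1 : ∀ x', Integrable (fun y => y * f x' y) volume)
    (hf_mom2 : ∀ x', Integrable (fun y => y ^ 2 * f x' y) volume)
    -- integrability of the conditional means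
    (hm : Integrable (fun x' => ∫ y, y * f x' y) ν)
    (hm2 : Integrable (fun x' => (∫ y, y * f x' y) ^ 2) ν)
    -- joint integrability licensing Fubini's theorem
    (hFub1 : Integrable (fun q : ℝ × 𝒳 => q.1 * f q.2 q.1) (volume.prod ν))
    (hFub2 : Integrable
      (fun q : (ℝ × ℝ) × 𝒳 => f q.2 q.1.1 * f q.2 q.1.2 * q.1.1 * q.1.2)
      ((volume.prod volume).prod ν))
    (hSigma : Integrable
      (fun p : ℝ × ℝ =>
        ((∫ x', f x' p.1 * f x' p.2 ∂ν) -
            (∫ x', f x' p.1 ∂ν) * (∫ x', f x' p.2 ∂ν)) * p.1 * p.2)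
      (volume.prod volume)) :
    (∫ y₁, ∫ y₂,
        ((∫ x', f x' y₁ * f x' y₂ ∂ν) -
            (∫ x', f x' y₁ ∂ν) * (∫ x', f x' y₂ ∂ν)) * y₁ * y₂) =
      (∫ x', (∫ y, y * f x' y) ^ 2 ∂ν) - (∫ x', (∫ y, y * f x' y) ∂ν) ^ 2 := by
  simpa only [covarianceKernel, sq] using
    covariance_operator_integral_general (φ := fun y ↦ y) (ψ := fun y ↦ y) hFub1 hFub1 hFub2
end

section
/- Let 𝒳 be a measurable space, ν a probability measure on 𝒳, and κ : 𝒳 → Measure ℝ a measurable family of probability measures with finite first moments; write m(x') = ∫ y ∂(κ x'), assume m and m² are ν-integrable, and let μ = ∫ m ∂ν. Then the expected product of deviations of two conditionally iid labels from the model mean equals the variance of the conditional means: ∫ (∫∫ (μ − y₁)(μ − y₂) ∂(κ x')(y₁) ∂(κ x')(y₂)) ∂ν(x') = ∫ m(x')² ∂ν(x') − (∫ m(x') ∂ν(x'))². Hence for a covariance-calibrated pair model whose data distribution factorizes as p(y₁,y₂|x') = p(y₁|x')p(y₂|x'), the off-diagonal term of the calibrated covariance matrix satisfies cov_θ(x)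 = V[E[Y|X] | [x]_c]. -/
open MeasureTheory

open ProbabilityTheory

lemma integral_integral_sub_mul_sub {𝕜 Ω₁ Ω₂ : Type*} [RCLike 𝕜]
    [MeasurableSpace Ω₁] [MeasurableSpace Ω₂]
    (P₁ : Measure Ω₁) (P₂ : Measure Ω₂) [IsProbabilityMeasure P₁] [IsProbabilityMeasure P₂]
    {f₁ : Ω₁ → 𝕜} {f₂ : Ω₂ → 𝕜} (hf₁ : Integrable f₁ P₁) (hf₂ : Integrable f₂ P₂) (c₁ c₂ : 𝕜) :
    ∫ ω₂, ∫ ω₁, (c₁ - f₁ ω₁) * (c₂ - f₂ ω₂) ∂P₁ ∂P₂ =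
      (c₁ - ∫ ω, f₁ ω ∂P₁) * (c₂ - ∫ ω, f₂ ω ∂P₂) := by
  simp only [integral_mul_const, integral_const_mul, integral_sub (integrable_const _) hf₁,
    integral_sub (integrable_const _) hf₂, integral_const, probReal_univ, one_smul]

/-- Iterated integration against `κ₁ x` and `κ₂ x` encodes conditional independence of the two
labels, so this is the law of total covariance with vanishing conditional covariance. -/
theorem covariance_calibration_off_diagonal_general
    {𝒳 Ω₁ Ω₂ : Type*} [MeasurableSpace 𝒳] [MeasurableSpace Ω₁] [MeasurableSpace Ω₂]
    (ν : Measure 𝒳) [IsProbabilityMeasure ν]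
    (κ₁ : 𝒳 → Measure Ω₁) (κ₂ : 𝒳 → Measure Ω₂)
    (hκ₁ : ∀ᵐ x ∂ν, IsProbabilityMeasure (κ₁ x)) (hκ₂ : ∀ᵐ x ∂ν, IsProbabilityMeasure (κ₂ x))
    {Y₁ : Ω₁ → ℝ} {Y₂ : Ω₂ → ℝ}
    (hY₁ : ∀ᵐ x ∂ν, Integrable Y₁ (κ₁ x)) (hY₂ : ∀ᵐ x ∂ν, Integrable Y₂ (κ₂ x))
    {m₁ m₂ : 𝒳 → ℝ}
    (hm₁ : ∀ᵐ x ∂ν, m₁ x = ∫ ω, Y₁ ω ∂κ₁ x) (hm₂ : ∀ᵐ x ∂ν, m₂ x = ∫ ω, Y₂ ω ∂κ₂ x)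
    (hm₁_L2 : MemLp m₁ 2 ν) (hm₂_L2 : MemLp m₂ 2 ν) :
    ∫ x, ∫ ω₂, ∫ ω₁, (ν[m₁] - Y₁ ω₁) * (ν[m₂] - Y₂ ω₂) ∂κ₁ x ∂κ₂ x ∂ν =
      ν[m₁ * m₂] - ν[m₁] * ν[m₂] := by
  calc
    _ = ∫ x, (ν[m₁] - m₁ x) * (ν[m₂] - m₂ x) ∂ν := by
      refine integral_congr_ae ?_
      filter_upwards [hκ₁, hκ₂, hY₁, hY₂, hm₁, hm₂] with x _ _ hY₁x hY₂x hm₁x hm₂x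
      rw [integral_integral_sub_mul_sub _ _ hY₁x hY₂x, hm₁x, hm₂x]
    _ = cov[m₁, m₂; ν] := integral_congr_ae <| .of_forall fun x ↦ by ring
    _ = ν[m₁ * m₂] - ν[m₁] * ν[m₂] := covariance_eq_sub hm₁_L2 hm₂_L2

/-- **Covariance calibration: off-diagonal term equals the grouping loss.**
With `m x' = ∫ y ∂(κ x')` and `μ = ∫ m ∂ν`, the expected product of deviations
of two conditionally iid labels from the model mean equals the variance of the
conditional means:
`∫∫∫ (μ − y₁)(μ − y₂) ∂(κ x')(y₁) ∂(κ x')(y₂) ∂ν = V[E[Y|X] | [x]_c]`.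
Hence for a covariance-calibrated pair model with conditionally iid labels,
the off-diagonal term of the calibrated covariance matrix satisfies
`cov_θ(x) = V[E[Y|X] | [x]_c]`. -/
theorem covariance_calibration_off_diagonal
    {𝒳 : Type*} [MeasurableSpace 𝒳]
    (ν : Measure 𝒳) [IsProbabilityMeasure ν]
    (κ : 𝒳 → Measure ℝ) (hκ : Measurable κ)
    (hκprob : ∀ x', IsProbabilityMeasure (κ x'))
    (hκmom : ∀ x', Integrable (fun y : ℝ => y) (κ x'))
    (hm : Integrable (fun x' => ∫ y, y ∂(κ x')) ν)
    (hm2 : Integrable (fun x' => (∫ y, y ∂(κ x')) ^ 2) ν) :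
    (∫ x', (∫ y₂, (∫ y₁,
        ((∫ x'', (∫ z, z ∂(κ x'')) ∂ν) - y₁) *
          ((∫ x'', (∫ z, z ∂(κ x'')) ∂ν) - y₂) ∂(κ x')) ∂(κ x')) ∂ν) =
      (∫ x', (∫ y, y ∂(κ x')) ^ 2 ∂ν) - (∫ x', (∫ y, y ∂(κ x')) ∂ν) ^ 2 := by
  have hm_L2 := (memLp_two_iff_integrable_sq hm.aestronglyMeasurable).2 hm2
  simpa only [Pi.mul_apply, ← sq] using covariance_calibration_off_diagonal_general ν κ κ
    (.of_forall hκprob) (.of_forall hκprob) (.of_forall hκmom) (.of_forall hκmom)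
    (.of_forall fun _ ↦ rfl) (.of_forall fun _ ↦ rfl) hm_L2 hm_L2
end
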